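/- arXiv:0710.3065 — 2 statements merged into one kernel-verified Lean document; each statement's English description precedes it below -/
import Mathlib

section
/- Let α_- ≤ α_+ be real numbers, R > 0, and let ρ : ℝ → [0, ∞) be a measurable function with ρ ≤ R and ρ = 0 outside [α_-, α_+]. Fix s ∈ (0, 1) and constants C̃ ≥ 0, C_b ≥ 0, and β > 0. Then there exists λ₀ > 0 such that for all λ ≥ λ₀, all a ∈ ℝ, and all c ∈ [0, C_b], one has c · (1 + c·C̃·λ^{−s}) · ∫_ℝ |a + λV|^{−s} ρ(V) dV < β. -/
open MeasureTheory

noncomputable section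

/-!
The substitution `a + λV = λ(a/λ + V)` pulls the factor `λ ^ (-s)` out of the integral. What is left
is a translate of `|·| ^ (-s)` integrated against the single-site distribution. Inside the unit
window around the singularity the bounded density controls it by the Lebesgue integral of
`|u| ^ (-s)` over `[-1, 1]`, which is finite since `s < 1`; outside the window the integrand is at
most `1` and the total mass controls it. This bound does not depend on `a`, so the whole expression
is `O(λ ^ (-s))` uniformly in `a` and `c`.
-/

open Set Filter Topology
open scoped ENNReal NNReal

section TranslationBound

variable {G : Type*} [MeasurableSpace G] [AddGroup G] [MeasurableAdd G] {μ ν : Measure G}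
  [ν.IsAddLeftInvariant] {R B : ℝ≥0∞} {f : G → ℝ≥0∞} {S : Set G}

theorem lintegral_comp_add_left_le_of_le_smul (hμ : μ ≤ R • ν) (hS : MeasurableSet S)
    (hf : ∀ u ∉ S, f u ≤ B) (t : G) :
    ∫⁻ v, f (t + v) ∂μ ≤ R * ∫⁻ u in S, f u ∂ν + B * μ univ := by
  have hT : MeasurableSet ((t + ·) ⁻¹' S) := measurable_const_add t hS
  have near : ∫⁻ v in (t + ·) ⁻¹' S, f (t + v) ∂μ ≤ R * ∫⁻ u in S, f u ∂ν := calc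
    _ ≤ ∫⁻ v in (t + ·) ⁻¹' S, f (t + v) ∂(R • ν) :=
      lintegral_mono' (Measure.restrict_mono le_rfl hμ) le_rfl
    _ = R * ∫⁻ v in (t + ·) ⁻¹' S, f (t + v) ∂ν := by
      rw [setLIntegral_smul_measure, smul_eq_mul]
    _ = R * ∫⁻ u in S, f u ∂ν := by
      rw [(measurePreserving_add_left ν t).setLIntegral_comp_preimage_emb
        (measurableEmbedding_addLeft t)]
  have far : ∫⁻ v in ((t + ·) ⁻¹' S)ᶜ, f (t + v) ∂μ ≤ B * μ univ := calc
    _ ≤ ∫⁻ _ in ((t + ·) ⁻¹' S)ᶜ, B ∂μ := setLIntegral_mono' hT.compl fun v hv ↦ hf (t + v) hv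
    _ = B * μ ((t + ·) ⁻¹' S)ᶜ := setLIntegral_const _ _
    _ ≤ B * μ univ := by gcongr; exact subset_univ _
  rw [← lintegral_add_compl _ hT]
  exact add_le_add near far

end TranslationBound

section BoundedDensity

variable {α : Type*} [MeasurableSpace α] {μ : Measure α}

theorem withDensity_le_smul_of_ae_le {f : α → ℝ≥0∞} {R : ℝ≥0∞} (hf : ∀ᵐ x ∂μ, f x ≤ R) :
    μ.withDensity f ≤ R • μ := by
  rw [← withDensity_const]
  exact withDensity_mono hf

theorem isFiniteMeasure_withDensity_of_support_subset {f : α → ℝ≥0∞} {R : ℝ≥0} {S : Set α}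
    (hS : μ S ≠ ∞) (hfS : f.support ⊆ S) (hf : ∀ x ∈ S, f x ≤ R) :
    IsFiniteMeasure (μ.withDensity f) := by
  refine isFiniteMeasure_withDensity ?_
  rw [← setLIntegral_eq_of_support_subset hfS]
  exact (setLIntegral_lt_top_of_le_nnreal hS ⟨R, hf⟩).ne

theorem lintegral_ofReal_mul_eq_lintegral_withDensity {f ρ : α → ℝ} (hf : ∀ x, 0 ≤ f x)
    (hρ : Measurable ρ) :
    ∫⁻ x, ENNReal.ofReal (f x * ρ x) ∂μ =
      ∫⁻ x, ENNReal.ofReal (f x) ∂μ.withDensity fun x ↦ ENNReal.ofReal (ρ x) := by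
  rw [lintegral_withDensity_eq_lintegral_mul_non_measurable _ hρ.ennreal_ofReal
    (.of_forall fun _ ↦ ENNReal.ofReal_lt_top)]
  simp only [Pi.mul_apply, ENNReal.ofReal_mul (hf _), mul_comm]

end BoundedDensity

theorem setLIntegral_Icc_abs_rpow_lt_top {p : ℝ} (hp : -1 < p) {r : ℝ} (hr : 0 ≤ r) :
    ∫⁻ u in Icc (-r) r, ENNReal.ofReal (|u| ^ p) < ∞ := by
  have hint : IntervalIntegrable (fun u : ℝ ↦ |u| ^ p) volume (-r) r := by
    refine intervalIntegrable_of_even (fun u ↦ by rw [abs_neg]) fun x hx ↦ ?_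
    refine (intervalIntegral.intervalIntegrable_rpow' hp).congr fun u hu ↦ ?_
    rw [uIoc_of_le hx.le] at hu
    simp only [abs_of_pos hu.1]
  rw [intervalIntegrable_iff_integrableOn_Icc_of_le (by linarith)] at hint
  exact hint.lintegral_lt_top

theorem abs_add_mul_rpow {lam : ℝ} (hlam : 0 < lam) (a v p : ℝ) :
    |a + lam * v| ^ p = lam ^ p * |a / lam + v| ^ p := by
  have hfactor : a + lam * v = lam * (a / lam + v) := by field_simp
  rw [hfactor, abs_mul, abs_of_pos hlam, Real.mul_rpow hlam.le (abs_nonneg _)]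

theorem lintegral_abs_add_mul_rpow {lam : ℝ} (hlam : 0 < lam) (μ : Measure ℝ) (a p : ℝ) :
    ∫⁻ v, ENNReal.ofReal (|a + lam * v| ^ p) ∂μ =
      ENNReal.ofReal (lam ^ p) * ∫⁻ v, ENNReal.ofReal (|a / lam + v| ^ p) ∂μ := by
  simp_rw [abs_add_mul_rpow hlam, ENNReal.ofReal_mul (Real.rpow_nonneg hlam.le p)]
  exact lintegral_const_mul' _ _ ENNReal.ofReal_ne_top

theorem exists_forall_lintegral_abs_add_rpow_neg_le {μ : Measure ℝ} [IsFiniteMeasure μ]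
    {R : ℝ≥0∞} (hR : R ≠ ∞) (hμ : μ ≤ R • volume) {s : ℝ} (hs : s ∈ Ico (0 : ℝ) 1) :
    ∃ K ≠ ∞, ∀ t, ∫⁻ v, ENNReal.ofReal (|t + v| ^ (-s)) ∂μ ≤ K := by
  have hle_one : ∀ u ∉ Icc (-1 : ℝ) 1, ENNReal.ofReal (|u| ^ (-s)) ≤ 1 := fun u hu ↦ by
    rw [mem_Icc, ← abs_le, not_le] at hu
    exact ENNReal.ofReal_le_one.2
      (Real.rpow_le_one_of_one_le_of_nonpos hu.le (neg_nonpos.2 hs.1))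
  refine ⟨_, ?_, lintegral_comp_add_left_le_of_le_smul hμ measurableSet_Icc hle_one⟩
  have hwindow := setLIntegral_Icc_abs_rpow_lt_top (neg_lt_neg hs.2) zero_le_one
  finiteness

theorem mul_one_add_mul_le {c C D x : ℝ} (hc : c ∈ Icc 0 C) (hx : 0 ≤ x) :
    c * (1 + c * D * x) ≤ C * (1 + C * |D| * x) := by
  obtain ⟨hc0, hcC⟩ := hc
  have hC : 0 ≤ C := hc0.trans hcC
  calc c * (1 + c * D * x) ≤ c * (1 + c * |D| * x) := by gcongr; exact le_abs_self D
    _ ≤ C * (1 + C * |D| * x) := by gcongr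

theorem tendsto_mul_one_add_mul_rpow_neg_mul {s : ℝ} (hs : 0 < s) (C D K : ℝ) :
    Tendsto (fun lam : ℝ ↦ C * (1 + C * D * lam ^ (-s)) * (lam ^ (-s) * K)) atTop (𝓝 0) := by
  have hdecay := tendsto_rpow_neg_atTop hs
  simpa only [mul_zero, zero_mul] using
    (((hdecay.const_mul (C * D)).const_add 1).const_mul C).mul (hdecay.mul_const K)

theorem single_site_criterion_of_forall_moment_le {μ : Measure ℝ} {s : ℝ} (hs : 0 < s)
    {K : ℝ≥0∞} (hK : K ≠ ∞) (hμ : ∀ t, ∫⁻ v, ENNReal.ofReal (|t + v| ^ (-s)) ∂μ ≤ K)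
    (Ctilde Cb : ℝ) {β : ℝ} (hβ : 0 < β) :
    ∃ lam₀ > (0 : ℝ), ∀ lam ≥ lam₀, ∀ a : ℝ, ∀ c ∈ Icc (0 : ℝ) Cb,
      ENNReal.ofReal (c * (1 + c * Ctilde * lam ^ (-s))) *
          (∫⁻ V, ENNReal.ofReal (|a + lam * V| ^ (-s)) ∂μ) <
        ENNReal.ofReal β := by
  have hsmall :=
    (tendsto_mul_one_add_mul_rpow_neg_mul hs Cb |Ctilde| K.toReal).eventually_lt_const hβ
  obtain ⟨lam₀, hlam₀, hlarge⟩ := (atTop_basis' (1 : ℝ)).eventually_iff.1 hsmall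
  refine ⟨lam₀, one_pos.trans_le hlam₀, fun lam hlam a c hc ↦ ?_⟩
  have hpos : 0 < lam := one_pos.trans_le (hlam₀.trans hlam)
  have hpow : 0 ≤ lam ^ (-s) := Real.rpow_nonneg hpos.le _
  have hCb : 0 ≤ Cb := hc.1.trans hc.2
  have hcoeff : 0 ≤ Cb * (1 + Cb * |Ctilde| * lam ^ (-s)) := by positivity
  calc
    _ ≤ ENNReal.ofReal (Cb * (1 + Cb * |Ctilde| * lam ^ (-s))) *
        (ENNReal.ofReal (lam ^ (-s)) * K) := by
      rw [lintegral_abs_add_mul_rpow hpos]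
      gcongr ENNReal.ofReal ?_ * (_ * ?_)
      · exact mul_one_add_mul_le hc hpow
      · exact hμ (a / lam)
    _ = ENNReal.ofReal (Cb * (1 + Cb * |Ctilde| * lam ^ (-s)) * (lam ^ (-s) * K.toReal)) := by
      rw [ENNReal.ofReal_mul hcoeff, ENNReal.ofReal_mul hpow, ENNReal.ofReal_toReal hK]
    _ < ENNReal.ofReal β := (ENNReal.ofReal_lt_ofReal_iff hβ).2 (hlarge hlam)

theorem strong_disorder_single_site_criterion_general {μ : Measure ℝ} [IsFiniteMeasure μ]
    {R : ℝ≥0∞} (hR : R ≠ ∞) (hμ : μ ≤ R • volume) {s : ℝ} (hs : s ∈ Ioo (0 : ℝ) 1)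
    (Ctilde Cb : ℝ) {β : ℝ} (hβ : 0 < β) :
    ∃ lam₀ > (0 : ℝ), ∀ lam ≥ lam₀, ∀ a : ℝ, ∀ c ∈ Icc (0 : ℝ) Cb,
      ENNReal.ofReal (c * (1 + c * Ctilde * lam ^ (-s))) *
          (∫⁻ V, ENNReal.ofReal (|a + lam * V| ^ (-s)) ∂μ) <
        ENNReal.ofReal β := by
  obtain ⟨K, hK, hle⟩ :=
    exists_forall_lintegral_abs_add_rpow_neg_le hR hμ (Ioo_subset_Ico_self hs)
  exact single_site_criterion_of_forall_moment_le hs.1 hK hle Ctilde Cb hβ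

theorem strong_disorder_single_site_criterion
    (αminus αplus R : ℝ) (hle : αminus ≤ αplus) (hR : 0 < R)
    (ρ : ℝ → ℝ) (hρmeas : Measurable ρ) (hρnn : ∀ v, 0 ≤ ρ v) (hρbd : ∀ v, ρ v ≤ R)
    (hρsupp : ∀ v, v ∉ Set.Icc αminus αplus → ρ v = 0)
    (s : ℝ) (hs : s ∈ Set.Ioo (0 : ℝ) 1)
    (Ctilde Cb β : ℝ) (hCtilde : 0 ≤ Ctilde) (hCb : 0 ≤ Cb) (hβ : 0 < β) :
    ∃ lam₀ > (0 : ℝ), ∀ lam ≥ lam₀, ∀ a : ℝ, ∀ c ∈ Set.Icc (0 : ℝ) Cb,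
      ENNReal.ofReal (c * (1 + c * Ctilde * lam ^ (-s))) *
          (∫⁻ V, ENNReal.ofReal (|a + lam * V| ^ (-s) * ρ V)) <
        ENNReal.ofReal β := by
  have hsupp : (fun v ↦ ENNReal.ofReal (ρ v)).support ⊆ Icc αminus αplus :=
    Function.support_subset_iff'.2 fun v hv ↦ by rw [hρsupp v hv, ENNReal.ofReal_zero]
  have hbound (v : ℝ) : ENNReal.ofReal (ρ v) ≤ ENNReal.ofReal R := ENNReal.ofReal_le_ofReal (hρbd v)
  have : IsFiniteMeasure (volume.withDensity fun v ↦ ENNReal.ofReal (ρ v)) :=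
    isFiniteMeasure_withDensity_of_support_subset measure_Icc_lt_top.ne hsupp fun v _ ↦ hbound v
  simpa only [lintegral_ofReal_mul_eq_lintegral_withDensity
      (fun _ ↦ Real.rpow_nonneg (abs_nonneg _) _) hρmeas] using
    strong_disorder_single_site_criterion_general ENNReal.ofReal_ne_top
      (withDensity_le_smul_of_ae_le (.of_forall hbound)) hs Ctilde Cb hβ

end
end

section
/- Let d ≥ 1 and let l_1, …, l_d > 0. For each j ∈ {1, …, d} let φ_j, φ̂_j : [0, l_j] → ℂ be continuous functions that are linearly independent as elements of L²([0, l_j]), and let w_j ∈ ℂ with w_j ≠ 0. For ξ ∈ ℓ²(ℤ^d; ℂ) and (m, j) ∈ ℤ^d × {1, …, d} define f_{m,j} ∈ L²([0, l_j]) by f_{m,j}(t) = (ξ(m + h_j)·φ_j(t) + ξ(m)·φ̂_j(t))/w_j, where h_1, …, h_d is the standard basis of ℤ^d. Then there exist constants 0 < c ≤ C, depending only on the functions φ_j, φ̂_j and the numbers w_j, such that for every ξ ∈ ℓ²(ℤ^d; ℂ): c·‖ξ‖² ≤ Σ_{m∈ℤ^d} Σ_{j=1}^d ‖f_{m,j}‖²_{L²([0,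 l_j])} ≤ C·‖ξ‖² (in particular the double sum is finite). Moreover one may take C = 2 Σ_{j=1}^d (‖φ_j‖² + ‖φ̂_j‖²)/|w_j|². -/
/-!
On a single edge `f_m = w⁻¹ • (ξ (m + h) • φ + ξ m • φ̂)` is a vector of `L²`. Passing to the
quotient by the line through `φ` kills the first term, so `‖f_m‖ ≥ ‖w‖⁻¹ ‖ξ m‖ ‖[φ̂]‖`, where
`[φ̂] ≠ 0` because `φ̂` is not a multiple of `φ`; squaring and summing over `m` gives the lower
bound. The upper bound is `‖u + v‖² ≤ 2 (‖u‖² + ‖v‖²)`, together with the fact that a translation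
does not increase the `ℓ²` norm.
-/

open MeasureTheory

noncomputable section

section NormedSpace

variable {𝕜 E V : Type*} [NormedField 𝕜] [SeminormedAddCommGroup E] [NormedSpace 𝕜 E]

theorem norm_mul_norm_mk_span_singleton_le (x y : E) (a b : 𝕜) :
    ‖b‖ * ‖Submodule.Quotient.mk (p := 𝕜 ∙ x) y‖ ≤ ‖a • x + b • y‖ := by
  have mk_eq : Submodule.Quotient.mk (p := 𝕜 ∙ x) (a • x + b • y) =
      b • Submodule.Quotient.mk (p := 𝕜 ∙ x) y := by
    rw [← Submodule.Quotient.mk_smul, Submodule.Quotient.eq, add_sub_cancel_right]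
    exact Submodule.smul_mem _ a (Submodule.mem_span_singleton_self x)
  rw [← norm_smul, ← mk_eq]
  exact Submodule.Quotient.norm_mk_le _ _

theorem norm_smul_add_smul_sq_le (x y : E) (a b : 𝕜) :
    ‖a • x + b • y‖ ^ 2 ≤ 2 * (‖a‖ ^ 2 * ‖x‖ ^ 2 + ‖b‖ ^ 2 * ‖y‖ ^ 2) :=
  calc ‖a • x + b • y‖ ^ 2 ≤ (‖a‖ * ‖x‖ + ‖b‖ * ‖y‖) ^ 2 := by
        gcongr
        simpa only [norm_smul] using norm_add_le (a • x) (b • y)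
    _ ≤ 2 * ((‖a‖ * ‖x‖) ^ 2 + (‖b‖ * ‖y‖) ^ 2) := add_sq_le
    _ = 2 * (‖a‖ ^ 2 * ‖x‖ ^ 2 + ‖b‖ ^ 2 * ‖y‖ ^ 2) := by simp only [mul_pow]

/-- The edge function `f_{m,j}` interpolating the vertex values `ξ` along the edge from `m` to
`τ m`. The profiles `x` and `y` stand for `φ_j` and `φ̂_j`, regarded as vectors of a normed space
such as `L²([0, l_j])`, and `τ` for the translation by `h_j`. -/
def edgeVector (τ : V → V) (w : 𝕜) (x y : E) (ξ : V → 𝕜) (m : V) : E :=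
  w⁻¹ • (ξ (τ m) • x + ξ m • y)

section SingleEdge

variable (τ : V → V) (w : 𝕜) (x y : E) (ξ : V → 𝕜)

theorem norm_edgeVector_sq (m : V) :
    ‖edgeVector τ w x y ξ m‖ ^ 2 = ‖ξ (τ m) • x + ξ m • y‖ ^ 2 / ‖w‖ ^ 2 := by
  rw [edgeVector, norm_smul, norm_inv, mul_pow, inv_pow, inv_mul_eq_div]

theorem le_norm_edgeVector_sq (m : V) :
    ‖Submodule.Quotient.mk (p := 𝕜 ∙ x) y‖ ^ 2 / ‖w‖ ^ 2 * ‖ξ m‖ ^ 2 ≤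
      ‖edgeVector τ w x y ξ m‖ ^ 2 := by
  rw [norm_edgeVector_sq, div_mul_eq_mul_div, mul_comm, ← mul_pow]
  gcongr
  exact norm_mul_norm_mk_span_singleton_le x y _ _

theorem norm_edgeVector_sq_le (m : V) :
    ‖edgeVector τ w x y ξ m‖ ^ 2 ≤
      2 * (‖x‖ ^ 2 / ‖w‖ ^ 2 * ‖ξ (τ m)‖ ^ 2 + ‖y‖ ^ 2 / ‖w‖ ^ 2 * ‖ξ m‖ ^ 2) :=
  calc ‖edgeVector τ w x y ξ m‖ ^ 2
      ≤ 2 * (‖ξ (τ m)‖ ^ 2 * ‖x‖ ^ 2 + ‖ξ m‖ ^ 2 * ‖y‖ ^ 2) / ‖w‖ ^ 2 := by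
        rw [norm_edgeVector_sq]
        gcongr
        exact norm_smul_add_smul_sq_le x y _ _
    _ = 2 * (‖x‖ ^ 2 / ‖w‖ ^ 2 * ‖ξ (τ m)‖ ^ 2 + ‖y‖ ^ 2 / ‖w‖ ^ 2 * ‖ξ m‖ ^ 2) := by ring

variable {τ ξ}

theorem summable_norm_edgeVector_sq (hτ : τ.Injective) (hξ : Summable fun m => ‖ξ m‖ ^ 2) :
    Summable fun m => ‖edgeVector τ w x y ξ m‖ ^ 2 :=
  .of_nonneg_of_le (fun _ => sq_nonneg _) (norm_edgeVector_sq_le τ w x y ξ)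
    ((((hξ.comp_injective hτ).mul_left _).add (hξ.mul_left _)).mul_left 2)

theorem le_tsum_norm_edgeVector_sq (hτ : τ.Injective) (hξ : Summable fun m => ‖ξ m‖ ^ 2) :
    ‖Submodule.Quotient.mk (p := 𝕜 ∙ x) y‖ ^ 2 / ‖w‖ ^ 2 * ∑' m, ‖ξ m‖ ^ 2 ≤
      ∑' m, ‖edgeVector τ w x y ξ m‖ ^ 2 := by
  rw [← tsum_mul_left]
  exact (hξ.mul_left _).tsum_le_tsum (le_norm_edgeVector_sq τ w x y ξ)
    (summable_norm_edgeVector_sq w x y hτ hξ)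

theorem tsum_norm_edgeVector_sq_le (hτ : τ.Injective) (hξ : Summable fun m => ‖ξ m‖ ^ 2) :
    ∑' m, ‖edgeVector τ w x y ξ m‖ ^ 2 ≤
      2 * ((‖x‖ ^ 2 + ‖y‖ ^ 2) / ‖w‖ ^ 2) * ∑' m, ‖ξ m‖ ^ 2 := by
  have hξτ : Summable fun m => ‖ξ (τ m)‖ ^ 2 := hξ.comp_injective hτ
  have tsum_shift_le : ∑' m, ‖ξ (τ m)‖ ^ 2 ≤ ∑' m, ‖ξ m‖ ^ 2 :=
    tsum_comp_le_tsum_of_inj hξ (fun _ => sq_nonneg _) hτ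
  calc ∑' m, ‖edgeVector τ w x y ξ m‖ ^ 2
      ≤ ∑' m, 2 * (‖x‖ ^ 2 / ‖w‖ ^ 2 * ‖ξ (τ m)‖ ^ 2 + ‖y‖ ^ 2 / ‖w‖ ^ 2 * ‖ξ m‖ ^ 2) :=
        (summable_norm_edgeVector_sq w x y hτ hξ).tsum_le_tsum (norm_edgeVector_sq_le τ w x y ξ)
          (((hξτ.mul_left _).add (hξ.mul_left _)).mul_left 2)
    _ = 2 * (‖x‖ ^ 2 / ‖w‖ ^ 2 * ∑' m, ‖ξ (τ m)‖ ^ 2 +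
          ‖y‖ ^ 2 / ‖w‖ ^ 2 * ∑' m, ‖ξ m‖ ^ 2) := by
        rw [tsum_mul_left, (hξτ.mul_left _).tsum_add (hξ.mul_left _), tsum_mul_left, tsum_mul_left]
    _ ≤ 2 * (‖x‖ ^ 2 / ‖w‖ ^ 2 * ∑' m, ‖ξ m‖ ^ 2 + ‖y‖ ^ 2 / ‖w‖ ^ 2 * ∑' m, ‖ξ m‖ ^ 2) := by
        gcongr
    _ = 2 * ((‖x‖ ^ 2 + ‖y‖ ^ 2) / ‖w‖ ^ 2) * ∑' m, ‖ξ m‖ ^ 2 := by ring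

end SingleEdge

end NormedSpace

theorem hasSum_norm_sq_lp_two {V : Type*} {E : V → Type*} [∀ m, NormedAddCommGroup (E m)]
    (ξ : lp E 2) : HasSum (fun m => ‖ξ m‖ ^ 2) (‖ξ‖ ^ 2) := by
  simpa using lp.hasSum_norm (p := 2) (by norm_num) ξ

theorem norm_mk_pos_of_notMem {𝕜 E : Type*} [NontriviallyNormedField 𝕜] [CompleteSpace 𝕜]
    [NormedAddCommGroup E] [NormedSpace 𝕜 E] (S : Submodule 𝕜 E) [FiniteDimensional 𝕜 S]
    {y : E} (hy : y ∉ S) : 0 < ‖Submodule.Quotient.mk (p := S) y‖ := by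
  have : IsClosed (S : Set E) := S.closed_of_finiteDimensional
  rwa [norm_pos_iff, ne_eq, Submodule.Quotient.mk_eq_zero]

theorem exists_pos_bounds_tsum_sum_norm_edgeVector_sq {𝕜 V ι : Type*} {E : ι → Type*}
    [NontriviallyNormedField 𝕜] [CompleteSpace 𝕜] [Fintype ι]
    [∀ j, NormedAddCommGroup (E j)] [∀ j, NormedSpace 𝕜 (E j)]
    {τ : ι → V → V} (hτ : ∀ j, (τ j).Injective) {w : ι → 𝕜} (hw : ∀ j, w j ≠ 0)
    {x y : ∀ j, E j} (hxy : ∃ j, y j ∉ 𝕜 ∙ x j) :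
    ∃ c : ℝ, 0 < c ∧ c ≤ 2 * ∑ j, (‖x j‖ ^ 2 + ‖y j‖ ^ 2) / ‖w j‖ ^ 2 ∧
      ∀ ξ : lp (fun _ : V => 𝕜) 2,
        Summable (fun m => ∑ j, ‖edgeVector (τ j) (w j) (x j) (y j) ξ m‖ ^ 2) ∧
        c * ‖ξ‖ ^ 2 ≤ ∑' m, ∑ j, ‖edgeVector (τ j) (w j) (x j) (y j) ξ m‖ ^ 2 ∧
        ∑' m, ∑ j, ‖edgeVector (τ j) (w j) (x j) (y j) ξ m‖ ^ 2 ≤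
          (2 * ∑ j, (‖x j‖ ^ 2 + ‖y j‖ ^ 2) / ‖w j‖ ^ 2) * ‖ξ‖ ^ 2 := by
  refine ⟨∑ j, ‖Submodule.Quotient.mk (p := 𝕜 ∙ x j) (y j)‖ ^ 2 / ‖w j‖ ^ 2, ?_, ?_, fun ξ => ?_⟩
  · obtain ⟨j, hj⟩ := hxy
    have mk_pos := norm_mk_pos_of_notMem _ hj
    have w_pos := norm_pos_iff.2 (hw j)
    exact Finset.sum_pos' (fun _ _ => by positivity) ⟨j, Finset.mem_univ j, by positivity⟩
  · rw [Finset.mul_sum]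
    refine Finset.sum_le_sum fun j _ => ?_
    rw [← mul_div_assoc]
    gcongr
    have mk_sq_le := pow_le_pow_left₀ (norm_nonneg _)
      (Submodule.Quotient.norm_mk_le (𝕜 ∙ x j) (y j)) 2
    linarith [sq_nonneg ‖x j‖, sq_nonneg ‖y j‖]
  · have hξ := hasSum_norm_sq_lp_two ξ
    have edge_summable j := summable_norm_edgeVector_sq (w j) (x j) (y j) (hτ j) hξ.summable
    refine ⟨summable_sum fun j _ => edge_summable j, ?_⟩
    rw [Summable.tsum_finsetSum fun j _ => edge_summable j, ← hξ.tsum_eq, Finset.mul_sum,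
      Finset.sum_mul, Finset.sum_mul]
    exact ⟨Finset.sum_le_sum fun j _ =>
        le_tsum_norm_edgeVector_sq (w j) (x j) (y j) (hτ j) hξ.summable,
      Finset.sum_le_sum fun j _ =>
        tsum_norm_edgeVector_sq_le (w j) (x j) (y j) (hτ j) hξ.summable⟩

theorem not_ae_eq_const_smul {α R E : Type*} [MeasurableSpace α] {μ : Measure α} [Ring R]
    [Nontrivial R] [AddCommGroup E] [Module R E] {f g : α → E}
    (hfg : ∀ a b : R, (∀ᵐ t ∂μ, a • f t + b • g t = 0) → b = 0) (c : R) :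
    ¬ g =ᵐ[μ] c • f := by
  intro hc
  have relation : ∀ᵐ t ∂μ, c • f t + (-1 : R) • g t = 0 := by
    filter_upwards [hc] with t ht
    simp [ht]
  exact neg_ne_zero.2 one_ne_zero (hfg c (-1) relation)

section L2

variable {α 𝕜 E : Type*} [MeasurableSpace α] {μ : Measure α} [NormedAddCommGroup E]

theorem norm_toLp_two_sq_eq_integral {f : α → E} (hf : MemLp f 2 μ) :
    ‖hf.toLp f‖ ^ 2 = ∫ t, ‖f t‖ ^ 2 ∂μ := by
  have sq_integral_nonneg : 0 ≤ ∫ t, ‖f t‖ ^ 2 ∂μ := integral_nonneg fun _ => sq_nonneg _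
  rw [Lp.norm_toLp, toReal_eLpNorm hf.1,
    lpNorm_eq_integral_norm_rpow_toReal two_ne_zero ENNReal.ofNat_ne_top hf.1]
  simpa using Real.rpow_inv_natCast_pow sq_integral_nonneg two_ne_zero

theorem norm_edgeVector_toLp_sq {V : Type*} [NormedField 𝕜] [NormedSpace 𝕜 E] {f g : α → E}
    (hf : MemLp f 2 μ) (hg : MemLp g 2 μ) (τ : V → V) (w : 𝕜) (ξ : V → 𝕜) (m : V) :
    ‖edgeVector τ w (hf.toLp f) (hg.toLp g) ξ m‖ ^ 2 =
      ∫ t, ‖w⁻¹ • (ξ (τ m) • f t + ξ m • g t)‖ ^ 2 ∂μ :=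
  norm_toLp_two_sq_eq_integral
    (((hf.const_smul (ξ (τ m))).add (hg.const_smul (ξ m))).const_smul w⁻¹)

theorem toLp_notMem_span_singleton [NormedField 𝕜] [NormedSpace 𝕜 E] {f g : α → E}
    (hf : MemLp f 2 μ) (hg : MemLp g 2 μ) (hfg : ∀ c : 𝕜, ¬ g =ᵐ[μ] c • f) :
    hg.toLp g ∉ 𝕜 ∙ hf.toLp f := by
  intro hmem
  obtain ⟨c, hc⟩ := Submodule.mem_span_singleton.1 hmem
  rw [← MemLp.toLp_const_smul, MemLp.toLp_eq_toLp_iff] at hc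
  exact hfg c hc.symm

theorem memLp_restrict_of_continuousOn_of_isCompact [TopologicalSpace α] [OpensMeasurableSpace α]
    [IsFiniteMeasureOnCompacts μ] {K : Set α} (hK : IsCompact K) (hK_meas : MeasurableSet K)
    {f : α → E} (hf : ContinuousOn f K) (p : ENNReal) : MemLp f p (μ.restrict K) := by
  have : IsFiniteMeasure (μ.restrict K) := ⟨by simpa using hK.measure_lt_top⟩
  obtain ⟨C, hC⟩ := hK.exists_bound_of_continuousOn hf
  exact .of_bound (hf.aestronglyMeasurable_of_isCompact hK hK_meas) C
    (ae_restrict_of_forall_mem hK_meas hC)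

end L2

theorem gamma_map_is_topological_isomorphism_onto_range_general
    {𝕜 V ι : Type*} {α E : ι → Type*} [NontriviallyNormedField 𝕜] [CompleteSpace 𝕜] [Fintype ι]
    [∀ j, MeasurableSpace (α j)] [∀ j, NormedAddCommGroup (E j)] [∀ j, NormedSpace 𝕜 (E j)]
    {μ : ∀ j, Measure (α j)} {τ : ι → V → V} (hτ : ∀ j, (τ j).Injective)
    {φ φhat : ∀ j, α j → E j} (hφ : ∀ j, MemLp (φ j) 2 (μ j)) (hφhat : ∀ j, MemLp (φhat j) 2 (μ j))
    (hind : ∃ j, ∀ c : 𝕜, ¬ φhat j =ᵐ[μ j] c • φ j) {w : ι → 𝕜} (hw : ∀ j, w j ≠ 0) :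
    ∃ c : ℝ, 0 < c ∧
      c ≤ 2 * ∑ j, ((∫ t, ‖φ j t‖ ^ 2 ∂μ j) + (∫ t, ‖φhat j t‖ ^ 2 ∂μ j)) / ‖w j‖ ^ 2 ∧
      ∀ ξ : lp (fun _ : V => 𝕜) 2,
        Summable (fun m => ∑ j, ∫ t,
          ‖(w j)⁻¹ • (ξ (τ j m) • φ j t + ξ m • φhat j t)‖ ^ 2 ∂μ j) ∧
        c * ‖ξ‖ ^ 2 ≤ (∑' m, ∑ j, ∫ t,
          ‖(w j)⁻¹ • (ξ (τ j m) • φ j t + ξ m • φhat j t)‖ ^ 2 ∂μ j) ∧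
        (∑' m, ∑ j, ∫ t, ‖(w j)⁻¹ • (ξ (τ j m) • φ j t + ξ m • φhat j t)‖ ^ 2 ∂μ j) ≤
          (2 * ∑ j, ((∫ t, ‖φ j t‖ ^ 2 ∂μ j) + (∫ t, ‖φhat j t‖ ^ 2 ∂μ j)) / ‖w j‖ ^ 2) *
            ‖ξ‖ ^ 2 := by
  simp only [← norm_edgeVector_toLp_sq (hφ _) (hφhat _), ← norm_toLp_two_sq_eq_integral (hφ _),
    ← norm_toLp_two_sq_eq_integral (hφhat _)]
  exact exists_pos_bounds_tsum_sum_norm_edgeVector_sq hτ hw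
    (hind.imp fun j => toLp_notMem_span_singleton (hφ j) (hφhat j))

theorem gamma_map_is_topological_isomorphism_onto_range
    (d : ℕ) (hd : 1 ≤ d) (l : Fin d → ℝ) (hl : ∀ j, 0 < l j)
    (φ φhat : Fin d → ℝ → ℂ)
    (hφc : ∀ j, ContinuousOn (φ j) (Set.Icc 0 (l j)))
    (hφhatc : ∀ j, ContinuousOn (φhat j) (Set.Icc 0 (l j)))
    -- linear independence of φ j and φhat j as elements of L²([0, l j])
    (hind : ∀ j, ∀ c₁ c₂ : ℂ,
      (∀ᵐ t ∂(volume.restrict (Set.Icc 0 (l j))), c₁ * φ j t + c₂ * φhat j t = 0) →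
      c₁ = 0 ∧ c₂ = 0)
    (w : Fin d → ℂ) (hw : ∀ j, w j ≠ 0) :
    ∃ c : ℝ, 0 < c ∧
      c ≤ 2 * ∑ j, ((∫ t in Set.Icc 0 (l j), ‖φ j t‖ ^ 2) +
          (∫ t in Set.Icc 0 (l j), ‖φhat j t‖ ^ 2)) / ‖w j‖ ^ 2 ∧
      ∀ ξ : lp (fun _ : Fin d → ℤ => ℂ) 2,
        Summable (fun m : Fin d → ℤ => ∑ j, ∫ t in Set.Icc 0 (l j),
          ‖(ξ (m + Pi.single j 1) * φ j t + ξ m * φhat j t) / w j‖ ^ 2) ∧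
        c * ‖ξ‖ ^ 2 ≤ (∑' m : Fin d → ℤ, ∑ j, ∫ t in Set.Icc 0 (l j),
          ‖(ξ (m + Pi.single j 1) * φ j t + ξ m * φhat j t) / w j‖ ^ 2) ∧
        (∑' m : Fin d → ℤ, ∑ j, ∫ t in Set.Icc 0 (l j),
          ‖(ξ (m + Pi.single j 1) * φ j t + ξ m * φhat j t) / w j‖ ^ 2) ≤
          (2 * ∑ j, ((∫ t in Set.Icc 0 (l j), ‖φ j t‖ ^ 2) +
            (∫ t in Set.Icc 0 (l j), ‖φhat j t‖ ^ 2)) / ‖w j‖ ^ 2) * ‖ξ‖ ^ 2 := by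
  have memLp_edge {j} {f : ℝ → ℂ} (hf : ContinuousOn f (Set.Icc 0 (l j))) :
      MemLp f 2 (volume.restrict (Set.Icc 0 (l j))) :=
    memLp_restrict_of_continuousOn_of_isCompact isCompact_Icc measurableSet_Icc hf 2
  simpa only [smul_eq_mul, inv_mul_eq_div] using
    gamma_map_is_topological_isomorphism_onto_range_general
      (fun j => add_left_injective (Pi.single j (1 : ℤ)))
      (fun j => memLp_edge (hφc j)) (fun j => memLp_edge (hφhatc j))
      ⟨⟨0, hd⟩, not_ae_eq_const_smul fun a b hab => (hind ⟨0, hd⟩ a b hab).2⟩ hw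

end
end
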